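/- Let k be a field, n ≥ 1 and d ≥ 1 natural numbers, and let I be a proper ideal of the polynomial ring k[x_1,…,x_n] generated by polynomials of total degree at most d. Suppose that for every polynomial f of total degree at most (2d)^(n·(n!)·2^((n−1)n)) with f ∉ I, there exists g ∈ k[x_1,…,x_n] with f·g − 1 ∈ I. Then I is a maximal ideal. -/

import Mathlib

/-!
Write `A = k[x₁,…,xₙ] / I` and `b` for the given degree bound: every polynomial of degree at most
`b` is zero or a unit in `A`. With `expo t = (t+1)! · 2^(t(t+1))`, choose a set of `s` variables
(encoded by an injection `σ : Fin s → Fin n`), with `s` maximal, such that `I` contains no nonzero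
polynomial of degree at most `(2d)^expo (n-s)` in these variables alone. Let `P` be the polynomial
ring in the chosen variables. By maximality each of the remaining `t = n - s` variables `x_j`
satisfies modulo `I` a nonzero polynomial relation over `P` of degree at most
`D = (2d)^expo (t-1)`; after normalisation all these relations have degree `D` in `x_j` and the
same leading coefficient `h` (`exists_common_leadingCoeff`).

* If `s = 0`, then `P = k`, so every element of `A` is represented by a polynomial of degree less
  than `D` in each variable, hence of total degree at most `n (D - 1) ≤ D ^ n = b`. Every nonzero
  element of `A` is therefore a unit.

* If `s > 0`, there is a contradiction. First, `P → A` is injective (`exists_low_degree`):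
  multiplication by `x_j` modulo the relations defines commuting operators on the space of
  dimension `D ^ t` over `Frac P` whose basis is the set of monomials in the remaining variables
  with exponents below `D`. A nonzero `q ∈ I ∩ P` would act invertibly, so the vectors obtained by
  applying the generators of `I` to basis vectors would span. Clearing denominators, these vectors
  have entries in `P` of small degree, and a nonvanishing maximal minor is, by the adjugate
  identity, a nonzero element of `I ∩ P`. Its degree is at most `D ^ t · d (tD + 1)`, which is at
  most `(2d)^expo t` (`bound_step`), against the choice of `s`.
  Second, `p = 1 + x h`, with `x` one of the chosen variables, has degree at most `b`, so it has an
  inverse `g` in `A`. Some `h ^ m * g` is integral over `P` (`exists_pow_mul_isIntegralElem`), and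
  `p * (h ^ m * g) = h ^ m`; since `p` is coprime to `h`, this makes `p` a unit of `P`
  (`isUnit_of_isIntegralElem`), although `p` is not constant.
-/

open MvPolynomial

namespace BoundedMaximal

/-! ### Companion operators on truncated monomials -/

section Operators

variable {R : Type*} [CommRing R] {T : Type*} [DecidableEq T] {D : ℕ}

/-- The operator on functions `v : (T → Fin D) → R` that applies the matrix `y j` to the `j`-th
coordinate of the index, i.e. `y j ⊗ 1` on the `T`-fold tensor power of `R ^ D`. -/
def coordOp (y : T → Matrix (Fin D) (Fin D) R) (j : T) : Module.End R ((T → Fin D) → R) where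
  toFun v β := ∑ b, y j (β j) b * v (Function.update β j b)
  map_add' v w := by
    funext β
    simp [mul_add, Finset.sum_add_distrib]
  map_smul' c v := by
    funext β
    simp only [Pi.smul_apply, smul_eq_mul, RingHom.id_apply, Finset.mul_sum]
    exact Finset.sum_congr rfl fun b _ => by ring

lemma coordOp_apply (y : T → Matrix (Fin D) (Fin D) R) (j : T) (v : (T → Fin D) → R)
    (β : T → Fin D) :
    coordOp y j v β = ∑ b, y j (β j) b * v (Function.update β j b) := rfl

lemma coordOp_comm (y : T → Matrix (Fin D) (Fin D) R) (i j : T) :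
    coordOp y i * coordOp y j = coordOp y j * coordOp y i := by
  rcases eq_or_ne i j with rfl | hij
  · rfl
  refine LinearMap.ext fun v => funext fun β => ?_
  simp only [Module.End.mul_apply, coordOp_apply, Finset.mul_sum]
  rw [Finset.sum_comm]
  refine Finset.sum_congr rfl fun b _ => Finset.sum_congr rfl fun a _ => ?_
  rw [Function.update_of_ne hij.symm, Function.update_of_ne hij, Function.update_comm hij]
  ring

lemma coordOp_map {F : Type*} [CommRing F] (g : R →+* F) (y : T → Matrix (Fin D) (Fin D) R)
    (j : T) (v : (T → Fin D) → R) :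
    (fun β => g (coordOp y j v β)) =
      coordOp (fun j => (y j).map g) j (fun β => g (v β)) := by
  funext β
  simp [coordOp_apply]

/-- For `r` of degree at most `D` with `h = r.coeff D`, the matrix of multiplication by `h x` on the
basis `1, x, …, x ^ (D - 1)` modulo `r`: the column `b` holds the coordinates of `h x ^ (b + 1)`.
The factor `h` keeps the entries in `R`. -/
def companion (D : ℕ) (r : Polynomial R) : Matrix (Fin D) (Fin D) R := fun a b =>
  if (b : ℕ) + 1 < D then (if (a : ℕ) = b + 1 then r.coeff D else 0) else -r.coeff a

variable [Fintype T] {A : Type*} [CommRing A]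

/-- The element of `A` with coordinates `v` on the truncated monomials `∏ j, ξ j ^ β j`, where
`β j < D`. -/
def theta (φ : R →+* A) (ξ : T → A) (v : (T → Fin D) → R) : A :=
  ∑ β, φ (v β) * ∏ j, ξ j ^ (β j : ℕ)

lemma sum_companion (φ : R →+* A) (x : A) (r : Polynomial R) (hr : r.natDegree ≤ D)
    (h0 : r.eval₂ φ x = 0) (b : Fin D) :
    ∑ a, φ (companion D r a b) * x ^ (a : ℕ) = φ (r.coeff D) * x * x ^ (b : ℕ) := by
  unfold companion
  split_ifs with hb
  · rw [Finset.sum_eq_single (⟨b + 1, hb⟩ : Fin D)]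
    · simp [pow_succ]; ring
    · intro a _ ha
      have : (a : ℕ) ≠ b + 1 := fun h => ha (Fin.ext h)
      simp [this]
    · simp
  · have hbD : (b : ℕ) + 1 = D := by have := b.2; omega
    rw [Polynomial.eval₂_eq_sum_range' φ (Nat.lt_succ_of_le hr) x, Finset.sum_range_succ,
      ← Fin.sum_univ_eq_sum_range (fun i => φ (r.coeff i) * x ^ i)] at h0
    simp only [map_neg, neg_mul, Finset.sum_neg_distrib]
    rw [mul_assoc, ← pow_succ', hbD]
    linear_combination -h0

/-- Under `theta`, the companion operator of `r j` becomes multiplication by `h * ξ j`, where `h` is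
the coefficient of degree `D` of `r j`. -/
lemma theta_coordOp (φ : R →+* A) (ξ : T → A) (r : T → Polynomial R) (j : T)
    (hr : (r j).natDegree ≤ D) (h0 : (r j).eval₂ φ (ξ j) = 0) (v : (T → Fin D) → R) :
    theta φ ξ (coordOp (fun j => companion D (r j)) j v) =
      φ ((r j).coeff D) * ξ j * theta φ ξ v := by
  have key : ∀ (β : T → Fin D) (a : Fin D),
      ∏ i, ξ i ^ ((Function.update β j a i : Fin D) : ℕ) =
        ξ j ^ (a : ℕ) * ∏ i ∈ Finset.univ.erase j, ξ i ^ (β i : ℕ) := by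
    intro β a
    rw [← Finset.mul_prod_erase _ _ (Finset.mem_univ j), Function.update_self]
    congr 1
    refine Finset.prod_congr rfl fun i hi => ?_
    rw [Function.update_of_ne (Finset.ne_of_mem_erase hi)]
  have key' : ∀ β : T → Fin D, ∏ i, ξ i ^ (β i : ℕ) =
        ξ j ^ (β j : ℕ) * ∏ i ∈ Finset.univ.erase j, ξ i ^ (β i : ℕ) := by
    intro β
    rw [← key β (β j), Function.update_eq_self]
  -- Exchanging `β j` with the summation index `b` turns rows into columns.
  let e : (T → Fin D) × Fin D → (T → Fin D) × Fin D := fun p => (Function.update p.1 j p.2, p.1 j)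
  have he : Function.Involutive e := by
    rintro ⟨β, b⟩
    simp [e]
  unfold theta
  simp only [coordOp_apply, map_sum, map_mul, Finset.sum_mul, Finset.mul_sum]
  rw [← Fintype.sum_prod_type' (fun β b => φ (companion D (r j) (β j) b) *
    φ (v (Function.update β j b)) * ∏ i, ξ i ^ (β i : ℕ))]
  rw [Fintype.sum_equiv he.toPerm _ (fun p : (T → Fin D) × Fin D =>
    φ (companion D (r j) p.2 (p.1 j)) * φ (v p.1) *
      ∏ i, ξ i ^ ((Function.update p.1 j p.2 i : Fin D) : ℕ))]
  · rw [Fintype.sum_prod_type]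
    refine Finset.sum_congr rfl fun β _ => ?_
    rw [key' β]
    simp only [key]
    calc _ = (∑ a, φ (companion D (r j) a (β j)) * ξ j ^ (a : ℕ)) *
          (φ (v β) * ∏ i ∈ Finset.univ.erase j, ξ i ^ (β i : ℕ)) := by
          rw [Finset.sum_mul]
          exact Finset.sum_congr rfl fun a _ => by ring
      _ = _ := by
          rw [sum_companion φ (ξ j) (r j) hr h0]
          ring
  · rintro ⟨β, b⟩
    simp [e]

end Operators

/-! ### Low-degree elements of the elimination ideal -/

open scoped IsMulCommutative in
/-- Evaluation of polynomials at pairwise commuting elements of a noncommutative algebra. -/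
lemma exists_algHom_of_commute {k B ν : Type*} [Field k] [Ring B] [Algebra k B] (x : ν → B)
    (hx : ∀ i j, x i * x j = x j * x i) :
    ∃ ρ : MvPolynomial ν k →ₐ[k] B, ∀ j, ρ (X j) = x j := by
  have hc : ∀ a ∈ Set.range x, ∀ b ∈ Set.range x, a * b = b * a := by
    rintro _ ⟨i, rfl⟩ _ ⟨j, rfl⟩
    exact hx i j
  have := Algebra.isMulCommutative_adjoin k hc
  refine ⟨(Algebra.adjoin k (Set.range x)).val.comp
    (aeval fun j => (⟨x j, Algebra.subset_adjoin ⟨j, rfl⟩⟩ : Algebra.adjoin k (Set.range x))), ?_⟩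
  intro j
  simp

lemma totalDegree_det_le {k τ E : Type*} [Field k] [Fintype E] [DecidableEq E]
    (M : Matrix E E (MvPolynomial τ k)) (δ : ℕ) (hM : ∀ a b, (M a b).totalDegree ≤ δ) :
    M.det.totalDegree ≤ Fintype.card E * δ := by
  rw [Matrix.det_apply]
  refine totalDegree_finsetSum_le fun π _ => ?_
  refine (totalDegree_smul_le _ _).trans ((totalDegree_finsetProd _ _).trans ?_)
  refine (Finset.sum_le_sum fun i _ => hM _ _).trans ?_
  simp


/-- Here `P = MvPolynomial τ k` is the ring in the chosen variables, and each remaining variable is a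
root modulo `ker π` of some `r j` over `P` of degree at most `D` with coefficient `h` in degree `D`.
There is a representation `ρ` of the polynomial ring on the `F`-space with basis the monomials in the
remaining variables with exponents below `D`, on which `P` acts by scalars. For `f` of degree at
most `a`, the vector `h ^ a • ρ f e_α` has entries in `P` of degree at most `a (H + 1)`, and it
represents `h ^ a f x ^ α` in `A`. -/
theorem exists_reduction {k τ ν A F : Type*} [Field k] [DecidableEq ν] [CommRing A] [Algebra k A]
    (σ : τ → ν) (hσ : Function.Injective σ) [Fintype {j // j ∉ Set.range σ}]
    [Field F] [Algebra (MvPolynomial τ k) F] [Algebra k F] [IsScalarTower k (MvPolynomial τ k) F]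
    (hF : Function.Injective (algebraMap (MvPolynomial τ k) F))
    (π : MvPolynomial ν k →ₐ[k] A) (D H : ℕ)
    (r : {j // j ∉ Set.range σ} → Polynomial (MvPolynomial τ k)) (h : MvPolynomial τ k)
    (hh : h ≠ 0) (hhH : h.totalDegree ≤ H) (hrD : ∀ j, (r j).natDegree ≤ D)
    (hrh : ∀ j, (r j).coeff D = h) (hrH : ∀ j i, ((r j).coeff i).totalDegree ≤ H)
    (hr0 : ∀ j, (r j).eval₂ (π.comp (rename σ)).toRingHom (π (X j)) = 0) :
    ∃ ρ : MvPolynomial ν k →ₐ[k] Module.End F (({j // j ∉ Set.range σ} → Fin D) → F),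
      (∀ q v, ρ (rename σ q) v = algebraMap (MvPolynomial τ k) F q • v) ∧
      ∀ f a (α : {j // j ∉ Set.range σ} → Fin D), f.totalDegree ≤ a →
        ∃ w : ({j // j ∉ Set.range σ} → Fin D) → MvPolynomial τ k,
          (∀ β, (w β).totalDegree ≤ a * (H + 1)) ∧
          theta (π.comp (rename σ)).toRingHom (fun j : {j // j ∉ Set.range σ} => π (X (j : ν))) w =
            π (rename σ h) ^ a * π f *
              theta (π.comp (rename σ)).toRingHom (fun j : {j // j ∉ Set.range σ} => π (X (j : ν))) (Pi.single α 1) ∧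
          (fun β => algebraMap (MvPolynomial τ k) F (w β)) =
            algebraMap (MvPolynomial τ k) F h ^ a • ρ f (Pi.single α 1) := by
  classical
  let T := {j // j ∉ Set.range σ}
  let P := MvPolynomial τ k
  set φ : P →+* A := (π.comp (rename σ)).toRingHom with hφ
  have hφr : ∀ q, φ q = π (rename σ q) := fun q => rfl
  set ξ : T → A := fun j => π (X (j : ν)) with hξ
  set g := algebraMap P F with hg
  have hgh : g h ≠ 0 := fun h0 => hh (hF (by rw [h0, map_zero]))
  let y : T → Matrix (Fin D) (Fin D) P := fun j => companion D (r j)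
  let yF : T → Matrix (Fin D) (Fin D) F := fun j => (y j).map g
  let x : ν → Module.End F ((T → Fin D) → F) := fun j =>
    if hj : j ∈ Set.range σ then algebraMap F _ (g (X hj.choose))
    else (g h)⁻¹ • coordOp yF ⟨j, hj⟩
  have hx : ∀ i j, x i * x j = x j * x i := by
    intro i j
    by_cases hi : i ∈ Set.range σ
    · simp only [x, dif_pos hi]
      exact Algebra.commutes _ _
    by_cases hj : j ∈ Set.range σ
    · simp only [x, dif_pos hj]
      exact (Algebra.commutes _ _).symm
    simp only [x, dif_neg hi, dif_neg hj, smul_mul_smul_comm]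
    rw [coordOp_comm]
  obtain ⟨ρ, hρ⟩ := exists_algHom_of_commute (k := k) x hx
  have hρσ : ∀ i, ρ (X (σ i)) = algebraMap F _ (g (X i)) := by
    intro i
    have hi : σ i ∈ Set.range σ := ⟨i, rfl⟩
    rw [hρ]
    simp only [x, dif_pos hi]
    rw [hσ hi.choose_spec]
  have hρT : ∀ (j : T) v, g h • ρ (X (j : ν)) v = coordOp yF j v := by
    intro j v
    rw [hρ]
    simp only [x, dif_neg j.2]
    rw [LinearMap.smul_apply, smul_smul, mul_inv_cancel₀ hgh, one_smul]
  have hρP : ∀ q v, ρ (rename σ q) v = g q • v := by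
    intro q v
    induction q using MvPolynomial.induction_on generalizing v with
    | C c =>
      rw [rename_C, ← MvPolynomial.algebraMap_eq, ← MvPolynomial.algebraMap_eq, AlgHom.commutes,
        hg, ← IsScalarTower.algebraMap_apply k P F, Module.algebraMap_end_apply,
        algebraMap_smul]
    | add p q hp hq => simp only [map_add, LinearMap.add_apply, hp, hq, add_smul]
    | mul_X p i hp =>
      rw [map_mul, map_mul, rename_X, hρσ, map_mul, Module.End.mul_apply, hp,
        Module.algebraMap_end_apply, smul_smul]
  refine ⟨ρ, hρP, ?_⟩
  intro f a α hfa
  -- The conclusion for `f` at level `a`; it is stable under sums, raising `a`, and `f ↦ f * X j`.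
  let Good : ℕ → MvPolynomial ν k → Prop := fun a f =>
    ∃ w : (T → Fin D) → P, (∀ β, (w β).totalDegree ≤ a * (H + 1)) ∧
      theta φ ξ w = φ h ^ a * π f * theta φ ξ (Pi.single α 1) ∧
      (fun β => g (w β)) = g h ^ a • ρ f (Pi.single α 1)
  have theta_smul : ∀ (q : P) (w : (T → Fin D) → P),
      theta φ ξ (fun β => q * w β) = φ q * theta φ ξ w := by
    intro q w
    simp only [theta, map_mul, Finset.mul_sum, mul_assoc]
  have good_C : ∀ c : k, Good 0 (C c) := by
    intro c
    refine ⟨fun β => C c * Pi.single (M := fun _ => P) α 1 β, ?_, ?_, ?_⟩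
    · intro β
      rcases eq_or_ne β α with rfl | hβ
      · simp
      · simp [Pi.single_eq_of_ne hβ]
    · rw [theta_smul, hφr, rename_C]
      simp
    · have := hρP (C c) (Pi.single α 1)
      rw [rename_C] at this
      rw [this]
      funext β
      rcases eq_or_ne β α with rfl | hβ
      · simp
      · simp [Pi.single_eq_of_ne hβ]
  have good_add : ∀ a f₁ f₂, Good a f₁ → Good a f₂ → Good a (f₁ + f₂) := by
    rintro a f₁ f₂ ⟨w₁, d₁, e₁, g₁⟩ ⟨w₂, d₂, e₂, g₂⟩
    refine ⟨fun β => w₁ β + w₂ β, ?_, ?_, ?_⟩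
    · intro β
      exact (totalDegree_add _ _).trans (max_le (d₁ β) (d₂ β))
    · have : theta φ ξ (fun β => w₁ β + w₂ β) = theta φ ξ w₁ + theta φ ξ w₂ := by
        simp only [theta, map_add, add_mul, Finset.sum_add_distrib]
      rw [this, e₁, e₂, map_add]
      ring
    · rw [map_add, LinearMap.add_apply, smul_add, ← g₁, ← g₂]
      funext β
      simp
  have good_succ : ∀ a f, Good a f → Good (a + 1) f := by
    rintro a f ⟨w, d, e, e'⟩
    refine ⟨fun β => h * w β, ?_, ?_, ?_⟩
    · intro β
      refine (totalDegree_mul _ _).trans ?_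
      have := d β
      rw [add_mul]
      omega
    · rw [theta_smul, e]
      ring
    · rw [pow_succ', mul_smul, ← e']
      funext β
      simp
  have good_X : ∀ a f j, Good a f → Good (a + 1) (f * X j) := by
    rintro a f j ⟨w, d, e, e'⟩
    by_cases hj : j ∈ Set.range σ
    · obtain ⟨i, rfl⟩ := hj
      refine ⟨fun β => (h * X i) * w β, ?_, ?_, ?_⟩
      · intro β
        refine (totalDegree_mul _ _).trans ?_
        have h1 := d β
        have h2 := totalDegree_mul h (X i)
        rw [totalDegree_X] at h2
        rw [add_mul]
        omega
      · rw [theta_smul, e, map_mul, hφr (X i), rename_X, map_mul]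
        ring
      · rw [mul_comm f, map_mul, Module.End.mul_apply, hρσ, Module.algebraMap_end_apply,
          smul_smul, pow_succ', mul_right_comm, mul_smul _ (g h ^ a), ← e']
        funext β
        simp
    · refine ⟨coordOp y ⟨j, hj⟩ w, ?_, ?_, ?_⟩
      · intro β
        rw [coordOp_apply]
        refine totalDegree_finsetSum_le fun b _ => (totalDegree_mul _ _).trans ?_
        have h1 := d (Function.update β ⟨j, hj⟩ b)
        have h2 : (y ⟨j, hj⟩ (β ⟨j, hj⟩) b).totalDegree ≤ H := by
          simp only [y, companion]
          split_ifs
          · exact hrH _ _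
          · simp
          · rw [totalDegree_neg]
            exact hrH _ _
        rw [add_mul]
        omega
      · rw [theta_coordOp φ ξ r ⟨j, hj⟩ (hrD _) (hr0 _), e, hrh, map_mul]
        ring
      · rw [coordOp_map g, e', mul_comm f, map_mul, Module.End.mul_apply, map_smul, pow_succ,
          mul_smul, hρT ⟨j, hj⟩]
  have good_le : ∀ a b f, a ≤ b → Good a f → Good b f := by
    intro a b f hab ha
    induction b, hab using Nat.le_induction with
    | base => exact ha
    | succ b _ ih => exact good_succ b f ih
  have good_mon : ∀ a (m : ν →₀ ℕ) (c : k), m.degree = a → Good a (monomial m c) := by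
    intro a
    induction a with
    | zero =>
      intro m c hm
      rw [Finsupp.degree_eq_zero_iff] at hm
      subst hm
      exact good_C c
    | succ a ih =>
      intro m c hm
      have hne : m ≠ 0 := by
        rintro rfl
        simp at hm
      obtain ⟨j, hj⟩ := Finsupp.ne_iff.mp hne
      have hle : Finsupp.single j 1 ≤ m := by
        rw [Finsupp.single_le_iff]
        exact Nat.one_le_iff_ne_zero.mpr hj
      have hm' : m - Finsupp.single j 1 + Finsupp.single j 1 = m := tsub_add_cancel_of_le hle
      have hdeg : (m - Finsupp.single j 1).degree = a := by
        have := congrArg Finsupp.degree hm'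
        rw [map_add, Finsupp.degree_single, hm] at this
        omega
      have := good_X a _ j (ih (m - Finsupp.single j 1) c hdeg)
      rwa [X, monomial_mul, hm', mul_one] at this
  have good_sum : ∀ (s : Finset (ν →₀ ℕ)) (u : (ν →₀ ℕ) → MvPolynomial ν k),
      (∀ m ∈ s, Good a (u m)) → Good a (∑ m ∈ s, u m) := by
    intro s u
    induction s using Finset.induction_on with
    | empty =>
      intro _
      have := good_le 0 a _ (Nat.zero_le a) (good_C 0)
      rwa [C_0] at this
    | insert m s hm ih =>
      intro hs
      rw [Finset.sum_insert hm]
      exact good_add _ _ _ (hs m (Finset.mem_insert_self m s))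
        (ih fun m' hm' => hs m' (Finset.mem_insert_of_mem hm'))
  have main : Good a f := by
    rw [f.as_sum]
    refine good_sum _ _ fun m hm => good_le m.degree a _ ?_ (good_mon _ m _ rfl)
    exact (le_totalDegree hm).trans hfa
  exact main

/-- If the remaining variables satisfy relations `r j` as in `exists_reduction` and `I` meets `P`
nontrivially, then `I` contains a nonzero element of `P` of controlled degree, namely a maximal minor
of the matrix of low-degree relations between the truncated monomials. -/
theorem exists_low_degree {k τ ν : Type*} [Field k] [DecidableEq ν]
    (σ : τ → ν) (hσ : Function.Injective σ) [Fintype {j // j ∉ Set.range σ}]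
    (I : Ideal (MvPolynomial ν k)) (S : Set (MvPolynomial ν k)) (hI : I = Ideal.span S)
    (d D H : ℕ) (hS : ∀ f ∈ S, f.totalDegree ≤ d) (hD : 0 < D)
    (r : {j // j ∉ Set.range σ} → Polynomial (MvPolynomial τ k)) (h : MvPolynomial τ k)
    (hh : h ≠ 0) (hhH : h.totalDegree ≤ H) (hrD : ∀ j, (r j).natDegree ≤ D)
    (hrh : ∀ j, (r j).coeff D = h) (hrH : ∀ j i, ((r j).coeff i).totalDegree ≤ H)
    (hrI : ∀ j, (r j).eval₂ (rename σ : MvPolynomial τ k →ₐ[k] _).toRingHom (X j) ∈ I)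
    (q : MvPolynomial τ k) (hq : q ≠ 0) (hqI : rename σ q ∈ I) :
    ∃ q' : MvPolynomial τ k, q' ≠ 0 ∧ rename σ q' ∈ I ∧
      q'.totalDegree ≤ D ^ Fintype.card {j // j ∉ Set.range σ} * (d * (H + 1)) := by
  classical
  let P := MvPolynomial τ k
  let F := FractionRing P
  have hF : Function.Injective (algebraMap P F) := IsFractionRing.injective P F
  let π : MvPolynomial ν k →ₐ[k] MvPolynomial ν k ⧸ I := Ideal.Quotient.mkₐ k I
  have hπ : ∀ f, π f = 0 ↔ f ∈ I := fun f => Ideal.Quotient.eq_zero_iff_mem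
  have hr0 : ∀ j, (r j).eval₂ (π.comp (rename σ)).toRingHom (π (X j)) = 0 := by
    intro j
    have h1 := (hπ _).2 (hrI j)
    have h2 := Polynomial.hom_eval₂ (r j) (rename σ : P →ₐ[k] MvPolynomial ν k).toRingHom
      π.toRingHom (X (j : ν))
    exact h2.symm.trans h1
  obtain ⟨ρ, hρP, hρ⟩ := exists_reduction (F := F) σ hσ hF π D H r h hh hhH hrD hrh hrH hr0
  let E := {j // j ∉ Set.range σ} → Fin D
  set g := algebraMap P F with hg
  have hgh : g h ≠ 0 := fun h0 => hh (hF (by rw [h0, map_zero]))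
  set Θ : (E → P) → _ := theta (π.comp (rename σ)).toRingHom (fun j => π (X (j : ν))) with hΘ
  -- Low-degree `P`-linear relations modulo `I` between the truncated monomials.
  let W : Set (E → P) := {w | (∀ β, (w β).totalDegree ≤ d * (H + 1)) ∧ Θ w = 0}
  let G : (E → P) → (E → F) := fun w β => g (w β)
  have hspan : Submodule.span F (G '' W) = ⊤ := by
    set U := Submodule.span F (G '' W) with hU
    -- `U` contains the image of every `ρ f`, `f ∈ I`, in particular of the invertible scalar `ρ q`.
    have hS' : ∀ f ∈ S, ∀ v, ρ f v ∈ U := by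
      intro f hf v
      rw [pi_eq_sum_univ' v, map_sum]
      refine U.sum_mem fun α _ => ?_
      rw [map_smul]
      refine U.smul_mem _ ?_
      obtain ⟨w, hw1, hw2, hw3⟩ := hρ f d α (hS f hf)
      have hfI : π f = 0 := (hπ f).2 (hI ▸ Ideal.subset_span hf)
      have hwU : G w ∈ U := Submodule.subset_span ⟨w, ⟨hw1, by
        rw [hfI, mul_zero, zero_mul] at hw2
        exact hw2⟩, rfl⟩
      have : ρ f (Pi.single α 1) = (g h ^ d)⁻¹ • G w := by
        rw [show G w = _ from hw3, smul_smul, inv_mul_cancel₀ (pow_ne_zero _ hgh), one_smul]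
      exact this ▸ U.smul_mem (g h ^ d)⁻¹ hwU
    have hI' : ∀ f ∈ I, ∀ v, ρ f v ∈ U := by
      intro f hf
      rw [hI] at hf
      induction hf using Submodule.span_induction with
      | mem f hf => exact hS' f hf
      | zero => intro v; simp
      | add f₁ f₂ _ _ h₁ h₂ =>
        intro v
        rw [map_add, LinearMap.add_apply]
        exact U.add_mem (h₁ v) (h₂ v)
      | smul c f _ hf =>
        intro v
        rw [smul_eq_mul, mul_comm, map_mul, Module.End.mul_apply]
        exact hf _
    rw [eq_top_iff]
    intro v _
    have h1 := hI' _ hqI v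
    rw [hρP] at h1
    have hgq : g q ≠ 0 := fun h0 => hq (hF (by rw [h0, map_zero]))
    have h2 := U.smul_mem (g q)⁻¹ h1
    rwa [smul_smul, inv_mul_cancel₀ hgq, one_smul] at h2
  obtain ⟨t, htW, htspan, htli⟩ := exists_linearIndependent F (G '' W)
  rw [hspan] at htspan
  let b : Module.Basis t F (E → F) := Module.Basis.mk htli (by
    rw [Subtype.range_coe]; exact htspan.ge)
  let e : E ≃ t := (Pi.basisFun F E).indexEquiv b
  have hM : ∀ i : E, ∃ w ∈ W, G w = (e i : E → F) := fun i => htW (e i).2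
  choose M hMW hMG using hM
  have hdet : (Matrix.of M).det ≠ 0 := by
    have hli : LinearIndependent F (fun i : E => ((e i : t) : E → F)) :=
      htli.comp e e.injective
    have hrow : ((Matrix.of M).map g).row = fun i : E => ((e i : t) : E → F) := by
      funext i
      exact hMG i
    rw [← hrow, Matrix.linearIndependent_rows_iff_isUnit, Matrix.isUnit_iff_isUnit_det] at hli
    intro h0
    have h1 : ((Matrix.of M).map g).det = g (Matrix.of M).det := (RingHom.map_det g _).symm
    rw [h1, h0, map_zero] at hli
    exact not_isUnit_zero hli
  refine ⟨(Matrix.of M).det, hdet, ?_, ?_⟩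
  -- Row `z` of the adjugate identity expresses `det • e_z` through the relations; `x ^ z = 1`.
  · let z : E := fun _ => ⟨0, hD⟩
    rw [← hπ]
    have h1 : (fun β => ∑ γ, (Matrix.of M).adjugate z γ * M γ β) =
        fun β => if z = β then (Matrix.of M).det else 0 := by
      funext β
      have := congrFun (congrFun (Matrix.adjugate_mul (Matrix.of M)) z) β
      rw [Matrix.mul_apply] at this
      simpa [Matrix.one_apply] using this
    have h2 : Θ (fun β => ∑ γ, (Matrix.of M).adjugate z γ * M γ β) = 0 := by
      have : Θ (fun β => ∑ γ, (Matrix.of M).adjugate z γ * M γ β) =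
          ∑ γ, π (rename σ ((Matrix.of M).adjugate z γ)) * Θ (M γ) := by
        simp only [hΘ, theta, map_sum, map_mul, Finset.sum_mul, Finset.mul_sum]
        rw [Finset.sum_comm]
        refine Finset.sum_congr rfl fun γ _ => Finset.sum_congr rfl fun β _ => ?_
        exact mul_assoc _ _ _
      rw [this]
      exact Finset.sum_eq_zero fun γ _ => by rw [(hMW γ).2, mul_zero]
    rw [h1] at h2
    have h3 : Θ (fun β => if z = β then (Matrix.of M).det else 0) =
        π (rename σ (Matrix.of M).det) := by
      simp only [hΘ, theta]
      rw [Finset.sum_eq_single z]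
      · simp [z]
      · intro β _ hβ
        simp [hβ.symm]
      · simp
    rw [← h3, h2]
  · refine (totalDegree_det_le (Matrix.of M) (d * (H + 1)) fun a c => (hMW a).1 c).trans ?_
    rw [show Fintype.card E = _ from Fintype.card_fun, Fintype.card_fin]

/-! ### Integrality -/

lemma exists_pow_mul_isIntegralElem {k τ ν A : Type*} [Field k] [CommRing A] [Algebra k A]
    (σ : τ → ν) (π : MvPolynomial ν k →ₐ[k] A)
    (r : {j // j ∉ Set.range σ} → Polynomial (MvPolynomial τ k)) (h : MvPolynomial τ k)
    (hrh : ∀ j, (r j).leadingCoeff = h)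
    (hr0 : ∀ j, (r j).eval₂ (π.comp (rename σ)).toRingHom (π (X j)) = 0)
    (f : MvPolynomial ν k) :
    ∃ m, (π.comp (rename σ)).toRingHom.IsIntegralElem (π (rename σ h) ^ m * π f) := by
  set φ := (π.comp (rename σ)).toRingHom with hφ
  have hφr : ∀ q, φ q = π (rename σ q) := fun q => rfl
  have hpow : ∀ (m : ℕ) (x : A), φ.IsIntegralElem x →
      φ.IsIntegralElem (π (rename σ h) ^ m * x) := by
    intro m x hx
    rw [← hφr, ← map_pow]
    exact φ.isIntegralElem_map.mul φ hx
  induction f using MvPolynomial.induction_on with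
  | C c =>
    refine ⟨0, ?_⟩
    rw [pow_zero, one_mul, ← rename_C σ, ← hφr]
    exact φ.isIntegralElem_map
  | add p q hp hq =>
    obtain ⟨a, ha⟩ := hp
    obtain ⟨b, hb⟩ := hq
    refine ⟨b + a, ?_⟩
    have h1 := hpow b _ ha
    have h2 := hpow a _ hb
    have h3 := h1.add φ h2
    convert h3 using 1
    rw [map_add]
    ring
  | mul_X p j hp =>
    obtain ⟨a, ha⟩ := hp
    by_cases hj : j ∈ Set.range σ
    · obtain ⟨i, rfl⟩ := hj
      refine ⟨a, ?_⟩
      have := ha.mul φ (φ.isIntegralElem_map (x := X i))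
      rw [hφr, rename_X] at this
      rwa [map_mul, ← mul_assoc]
    · refine ⟨a + 1, ?_⟩
      have h1 := φ.isIntegralElem_leadingCoeff_mul (r ⟨j, hj⟩) (π (X j)) (hr0 ⟨j, hj⟩)
      rw [hrh, hφr] at h1
      have := ha.mul φ h1
      convert this using 1
      rw [map_mul]
      ring

/-- If `q / p` is integral over `P` and `p` is coprime to `q`, then `p` is a unit: clearing
denominators in the integral equation gives `p ∣ q ^ r`. -/
lemma isUnit_of_isIntegralElem {P A : Type*} [CommRing P] [CommRing A] (φ : P →+* A)
    (hφ : Function.Injective φ) (p q : P) (hpq : IsCoprime p q) (y : A) (hy : φ.IsIntegralElem y)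
    (hpy : φ p * y = φ q) : IsUnit p := by
  obtain ⟨a, ha, hay⟩ := hy
  have h1 := Polynomial.scaleRoots_eval₂_eq_zero φ (s := p) hay
  rw [hpy, Polynomial.eval₂_at_apply] at h1
  have h2 : (a.scaleRoots p).eval q = 0 := hφ (by rw [map_zero]; exact h1)
  rw [Polynomial.eval_eq_sum_range, Polynomial.natDegree_scaleRoots,
    Finset.sum_range_succ] at h2
  have h3 : p ∣ q ^ a.natDegree := by
    have h4 : p ∣ ∑ i ∈ Finset.range a.natDegree, (a.scaleRoots p).coeff i * q ^ i := by
      refine Finset.dvd_sum fun i hi => ?_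
      rw [Polynomial.coeff_scaleRoots]
      have hi' : a.natDegree - i ≠ 0 := by
        have := Finset.mem_range.mp hi
        omega
      exact ((dvd_pow_self p hi').mul_left _).mul_right _
    rw [Polynomial.coeff_scaleRoots, ha.coeff_natDegree, Nat.sub_self, pow_zero, one_mul,
      one_mul] at h2
    exact (dvd_add_right h4).mp (h2 ▸ dvd_zero p)
  exact (hpq.pow_right).isUnit_of_dvd' dvd_rfl h3

/-! ### Normalising the relations -/

/-- Multiplying each `u j` by a power of the variable and by the leading coefficients of the others
makes all the relations formally of degree `D` with the same coefficient `h` in degree `D`. -/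
lemma exists_common_leadingCoeff {k τ T : Type*} [Field k] [Fintype T]
    (D : ℕ) (u : T → Polynomial (MvPolynomial τ k)) (hu : ∀ j, u j ≠ 0)
    (huD : ∀ j, (u j).natDegree ≤ D) (huc : ∀ j i, ((u j).coeff i).totalDegree ≤ D) :
    ∃ (r : T → Polynomial (MvPolynomial τ k)) (h : MvPolynomial τ k),
      h ≠ 0 ∧ h.totalDegree ≤ Fintype.card T * D ∧ (∀ j, (r j).natDegree ≤ D) ∧
      (∀ j, (r j).coeff D = h) ∧ (∀ j i, ((r j).coeff i).totalDegree ≤ Fintype.card T * D) ∧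
      ∀ j, u j ∣ r j := by
  classical
  have hcoeff : ∀ j i, ((Polynomial.X ^ (D - (u j).natDegree) * u j).coeff i).totalDegree ≤ D := by
    intro j i
    rw [Polynomial.coeff_X_pow_mul']
    split_ifs
    · exact huc _ _
    · simp
  have hcard : ∀ j : T, (Finset.univ.erase j).card * D + D = Fintype.card T * D := by
    intro j
    rw [← Nat.succ_mul, Nat.succ_eq_add_one, Finset.card_erase_add_one (Finset.mem_univ j),
      Finset.card_univ]
  have hprod : ∀ s : Finset T, (∏ i ∈ s, (u i).leadingCoeff).totalDegree ≤ s.card * D := by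
    intro s
    refine (totalDegree_finsetProd _ _).trans ?_
    refine (Finset.sum_le_sum fun i _ => huc i _).trans ?_
    simp
  refine ⟨fun j => Polynomial.C (∏ i ∈ Finset.univ.erase j, (u i).leadingCoeff) *
    (Polynomial.X ^ (D - (u j).natDegree) * u j), ∏ i, (u i).leadingCoeff, ?_, ?_, ?_, ?_, ?_, ?_⟩
  · exact Finset.prod_ne_zero_iff.mpr fun i _ => Polynomial.leadingCoeff_ne_zero.mpr (hu i)
  · exact hprod Finset.univ
  · intro j
    refine (Polynomial.natDegree_C_mul_le _ _).trans (Polynomial.natDegree_mul_le.trans ?_)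
    rw [Polynomial.natDegree_X_pow, Nat.sub_add_cancel (huD j)]
  · intro j
    dsimp only
    rw [Polynomial.coeff_C_mul, Polynomial.coeff_X_pow_mul', if_pos (Nat.sub_le _ _),
      Nat.sub_sub_self (huD j), mul_comm]
    exact Finset.mul_prod_erase _ (fun i => (u i).leadingCoeff) (Finset.mem_univ j)
  · intro j i
    dsimp only
    rw [Polynomial.coeff_C_mul]
    refine (totalDegree_mul _ _).trans ?_
    rw [← hcard j]
    exact add_le_add (hprod _) (hcoeff j i)
  · intro j
    exact (dvd_mul_left _ _).mul_left _

lemma eval₂_finSuccEquiv {k ν : Type*} [Field k] {s : ℕ} (σ : Fin s → ν) (j : ν)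
    (w : MvPolynomial (Fin (s + 1)) k) :
    (finSuccEquiv k s w).eval₂ (rename σ : MvPolynomial (Fin s) k →ₐ[k] _).toRingHom (X j) =
      rename (Fin.cons j σ : Fin (s + 1) → ν) w := by
  induction w using MvPolynomial.induction_on with
  | C c =>
    rw [finSuccEquiv_apply, eval₂Hom_C]
    simp
  | add p q hp hq => rw [map_add, Polynomial.eval₂_add, hp, hq, map_add]
  | mul_X p i hp =>
    rw [map_mul, Polynomial.eval₂_mul, hp, map_mul, rename_X]
    congr 1
    refine Fin.cases ?_ (fun i => ?_) i
    · rw [finSuccEquiv_X_zero, Polynomial.eval₂_X, Fin.cons_zero]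
    · rw [finSuccEquiv_X_succ, Polynomial.eval₂_C, Fin.cons_succ]
      simp

/-! ### Numerical bounds -/

/-- The exponent in the degree bound attached to a set of variables whose complement has `t`
elements. -/
def expo (t : ℕ) : ℕ := (t + 1).factorial * 2 ^ (t * (t + 1))

lemma expo_pos (t : ℕ) : 0 < expo t := by unfold expo; positivity

lemma expo_mono : Monotone expo := by
  intro a b hab
  unfold expo
  have := Nat.factorial_le (Nat.succ_le_succ hab)
  gcongr
  norm_num

lemma expo_succ (t : ℕ) : expo (t + 1) = expo t * ((t + 2) * 4 ^ (t + 1)) := by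
  unfold expo
  rw [Nat.factorial_succ (t + 1), show (4 : ℕ) = 2 ^ 2 by norm_num, ← pow_mul,
    show (t + 1) * (t + 1 + 1) = t * (t + 1) + 2 * (t + 1) by ring, pow_add]
  ring

lemma bound_step (d t : ℕ) (hd : 1 ≤ d) :
    ((2 * d) ^ expo (t - 1)) ^ t * (d * (t * (2 * d) ^ expo (t - 1) + 1)) ≤ (2 * d) ^ expo t := by
  cases t with
  | zero => simp [expo]; omega
  | succ t =>
    rw [Nat.add_sub_cancel, expo_succ, pow_mul]
    set D := (2 * d) ^ expo t with hD
    have h2d : 2 * d ≤ D := Nat.le_self_pow (expo_pos t).ne' _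
    have hD2 : 2 ≤ D := by omega
    have h1 : t + 2 ≤ D ^ (t + 1) :=
      (Nat.lt_two_pow_self (n := t + 1)).trans_le (Nat.pow_le_pow_left hD2 _)
    calc D ^ (t + 1) * (d * ((t + 1) * D + 1))
        ≤ D ^ (t + 1) * (D * ((t + 2) * D)) := by
          gcongr
          · omega
          · nlinarith
      _ ≤ D ^ (t + 1) * (D * (D ^ (t + 1) * D)) := by gcongr
      _ = D ^ (2 * (t + 2)) := by ring
      _ ≤ D ^ ((t + 2) * 4 ^ (t + 1)) := by
          refine Nat.pow_le_pow_right (by omega) ?_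
          rw [mul_comm]
          refine Nat.mul_le_mul_left _ ?_
          calc 2 ≤ 4 ^ 1 := by norm_num
            _ ≤ 4 ^ (t + 1) := Nat.pow_le_pow_right (by norm_num) (by omega)

lemma mul_pred_le_pow (n D : ℕ) (hD : 1 ≤ D) : n * (D - 1) ≤ D ^ n := by
  obtain ⟨e, rfl⟩ := Nat.exists_eq_add_of_le' hD
  have := one_add_mul_le_pow (R := ℤ) (a := e) (by omega) n
  zify
  rw [Nat.add_sub_cancel]
  linarith [add_comm (e : ℤ) 1 ▸ this]

end BoundedMaximal

open BoundedMaximal in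
/-- If a proper ideal of `k[x₁,…,xₙ]` generated in degree at most `d`
is maximal up to `(2d)^(n·(n!)·2^((n−1)n))` (every polynomial of at most that degree not
in `I` is invertible modulo `I`), then it is maximal. -/
theorem maximal_up_to_bound_implies_maximal
    (k : Type*) [Field k] (n d : ℕ) (hn : 1 ≤ n) (hd : 1 ≤ d)
    (I : Ideal (MvPolynomial (Fin n) k)) (hproper : I ≠ ⊤)
    (S : Set (MvPolynomial (Fin n) k)) (hgen : I = Ideal.span S)
    (hdeg : ∀ f ∈ S, f.totalDegree ≤ d)
    (hmax : ∀ f : MvPolynomial (Fin n) k,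
      f.totalDegree ≤ (2 * d) ^ (n * Nat.factorial n * 2 ^ ((n - 1) * n)) →
      f ∉ I → ∃ g : MvPolynomial (Fin n) k, f * g - 1 ∈ I) :
    I.IsMaximal := by
  classical
  have hb : n * Nat.factorial n * 2 ^ ((n - 1) * n) = expo (n - 1) * n := by
    unfold expo
    rw [Nat.sub_add_cancel hn]
    ring
  rw [hb] at hmax
  -- Some `s` variables satisfy no nonzero relation of degree at most `(2d)^expo (n-s)` modulo `I`.
  let Indep : ℕ → Prop := fun s => ∃ σ : Fin s → Fin n, Function.Injective σ ∧
    ∀ w : MvPolynomial (Fin s) k, w.totalDegree ≤ (2 * d) ^ expo (n - s) →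
      rename σ w ∈ I → w = 0
  have hIndep0 : Indep 0 := by
    refine ⟨Fin.elim0, fun a => a.elim0, fun w _ hw => ?_⟩
    by_contra hw0
    rw [eq_C_of_isEmpty w] at hw hw0
    rw [rename_C] at hw
    refine hproper (Ideal.eq_top_of_isUnit_mem I hw ?_)
    refine (IsUnit.mk0 _ fun h0 => hw0 ?_).map C
    rw [h0, C_0]
  let s := Nat.findGreatest Indep n
  obtain ⟨σ, hσ, hσI⟩ : Indep s := Nat.findGreatest_spec (Nat.zero_le n) hIndep0
  have hsn : s ≤ n := Nat.findGreatest_le n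
  have hgreatest : ¬ Indep (s + 1) := by
    intro hI
    have h1 : s + 1 ≤ n := by
      obtain ⟨σ', hσ', -⟩ := hI
      simpa using Fintype.card_le_of_injective σ' hσ'
    exact Nat.findGreatest_is_greatest (Nat.lt_succ_self s) h1 hI
  let T := {j // j ∉ Set.range σ}
  have hT : Fintype.card T = n - s := by
    have := Fintype.card_compl_set (Set.range σ)
    rw [Set.card_range_of_injective hσ, Fintype.card_fin, Fintype.card_fin] at this
    rw [← this]
    exact Fintype.card_congr (Equiv.refl _)
  -- For `s = n` the truncated subtraction gives `D = 2d`, but then no variable remains.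
  set D := (2 * d) ^ expo (n - s - 1) with hD
  have hD1 : 1 ≤ D := Nat.one_le_pow _ _ (by omega)
  have hu : ∀ j : T, ∃ u : Polynomial (MvPolynomial (Fin s) k), u ≠ 0 ∧ u.natDegree ≤ D ∧
      (∀ i, (u.coeff i).totalDegree ≤ D) ∧
      u.eval₂ (rename σ : MvPolynomial (Fin s) k →ₐ[k] _).toRingHom (X (j : Fin n)) ∈ I := by
    intro j
    have h1 : ¬ ∀ w : MvPolynomial (Fin (s + 1)) k,
        w.totalDegree ≤ (2 * d) ^ expo (n - (s + 1)) →
        rename (Fin.cons (j : Fin n) σ : Fin (s + 1) → Fin n) w ∈ I → w = 0 := fun h =>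
      hgreatest ⟨Fin.cons (j : Fin n) σ, Fin.cons_injective_iff.mpr ⟨j.2, hσ⟩, h⟩
    push Not at h1
    obtain ⟨w, hwD, hwI, hw0⟩ := h1
    rw [← Nat.sub_sub, ← hD] at hwD
    refine ⟨finSuccEquiv k s w, ?_, ?_, ?_, ?_⟩
    · rwa [Ne, EmbeddingLike.map_eq_zero_iff]
    · rw [natDegree_finSuccEquiv]
      exact (degreeOf_le_totalDegree w 0).trans hwD
    · intro i
      by_cases hi : (finSuccEquiv k s w).coeff i = 0
      · rw [hi]
        simp
      · have := totalDegree_coeff_finSuccEquiv_add_le w i hi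
        omega
    · rwa [eval₂_finSuccEquiv]
  choose u hu0 huD huc huI using hu
  obtain ⟨r, h, hh, hhH, hrD, hrh, hrH, hdvd⟩ := exists_common_leadingCoeff D u hu0 huD huc
  have hrI : ∀ j : T, (r j).eval₂ (rename σ : MvPolynomial (Fin s) k →ₐ[k] _).toRingHom
      (X (j : Fin n)) ∈ I := by
    intro j
    obtain ⟨c, hc⟩ := hdvd j
    rw [hc, Polynomial.eval₂_mul]
    exact I.mul_mem_right _ (huI j)
  let π : MvPolynomial (Fin n) k →ₐ[k] MvPolynomial (Fin n) k ⧸ I := Ideal.Quotient.mkₐ k I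
  have hπ : ∀ f, π f = 0 ↔ f ∈ I := fun f => Ideal.Quotient.eq_zero_iff_mem
  have hr0 : ∀ j : T, (r j).eval₂ (π.comp (rename σ)).toRingHom (π (X (j : Fin n))) = 0 := by
    intro j
    have h1 := (hπ _).2 (hrI j)
    have h2 := Polynomial.hom_eval₂ (r j)
      (rename σ : MvPolynomial (Fin s) k →ₐ[k] MvPolynomial (Fin n) k).toRingHom
      π.toRingHom (X (j : Fin n))
    exact h2.symm.trans h1
  rcases Nat.eq_zero_or_pos s with hs0 | hspos
  -- With no variables chosen, `A` is spanned over `k` by the truncated monomials.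
  · have hempty : IsEmpty (Fin s) := by rw [hs0]; infer_instance
    have hDn : D ^ n = (2 * d) ^ (expo (n - 1) * n) := by
      rw [hD, hs0, Nat.sub_zero, pow_mul]
    let F := FractionRing (MvPolynomial (Fin s) k)
    obtain ⟨ρ, -, hρ⟩ := exists_reduction (F := F) σ hσ (IsFractionRing.injective _ F) π D _ r h hh
      hhH hrD hrh hrH hr0
    have hc : coeff 0 h ≠ 0 := fun h0 => hh (by rw [eq_C_of_isEmpty h, h0, C_0])
    have hred : ∀ f, ∃ f', f'.totalDegree ≤ D ^ n ∧ π f' = π f := by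
      intro f
      obtain ⟨w, -, hw, -⟩ := hρ f f.totalDegree (fun _ => ⟨0, hD1⟩) le_rfl
      refine ⟨C (coeff 0 h ^ f.totalDegree)⁻¹ *
        theta (rename σ : MvPolynomial (Fin s) k →ₐ[k] _).toRingHom
          (fun j : T => X (j : Fin n)) w, ?_, ?_⟩
      · refine (totalDegree_mul _ _).trans ?_
        rw [totalDegree_C, zero_add]
        refine totalDegree_finsetSum_le fun β _ => (totalDegree_mul _ _).trans ?_
        have h1 : ((rename σ : MvPolynomial (Fin s) k →ₐ[k] MvPolynomial (Fin n) k).toRingHom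
            (w β)).totalDegree = 0 := by
          rw [eq_C_of_isEmpty (w β)]
          simp
        rw [h1, zero_add]
        refine (totalDegree_finsetProd _ _).trans ?_
        refine le_trans ?_ (mul_pred_le_pow n D hD1)
        calc _ ≤ ∑ j : T, (D - 1) := by
              refine Finset.sum_le_sum fun j _ => ?_
              refine (totalDegree_pow _ _).trans ?_
              rw [totalDegree_X, mul_one]
              have := (β j).2
              omega
          _ = n * (D - 1) := by
              rw [Finset.sum_const, Finset.card_univ, hT, hs0, Nat.sub_zero, smul_eq_mul]
      · have h1 : π (theta (rename σ : MvPolynomial (Fin s) k →ₐ[k] _).toRingHom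
            (fun j : T => X (j : Fin n)) w) = theta (π.comp (rename σ)).toRingHom
            (fun j : T => π (X (j : Fin n))) w := by
          simp only [theta, map_sum, map_mul, map_prod, map_pow]
          rfl
        have h2 : theta (π.comp (rename σ)).toRingHom
            (fun j : T => π (X (j : Fin n))) (Pi.single (fun _ => (⟨0, hD1⟩ : Fin D)) 1) = 1 := by
          unfold theta
          rw [Finset.sum_eq_single (fun _ => (⟨0, hD1⟩ : Fin D))]
          · simp
          · intro β _ hβ
            rw [Pi.single_eq_of_ne hβ, map_zero, zero_mul]
          · simp
        rw [map_mul, h1, hw, h2, mul_one, ← map_pow, ← mul_assoc, ← map_mul, ← map_mul]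
        congr 2
        conv_lhs => rw [eq_C_of_isEmpty h]
        rw [rename_C, ← C_pow, ← C_mul, coeff_zero_C, inv_mul_cancel₀ (pow_ne_zero _ hc), C_1,
          one_mul]
    rw [Ideal.isMaximal_iff]
    refine ⟨fun h1 => hproper ((Ideal.eq_top_iff_one I).mpr h1), ?_⟩
    intro J f hIJ hfI hfJ
    obtain ⟨f', hf'd, hf'⟩ := hred f
    have hf'I : f' ∉ I := by rwa [← hπ, hf', hπ]
    obtain ⟨g, hg⟩ := hmax f' (hDn ▸ hf'd) hf'I
    have h1 : f * g - 1 ∈ I := by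
      rw [← hπ, map_sub, map_mul] at hg ⊢
      rwa [← hf']
    have h2 := J.sub_mem (J.mul_mem_right g hfJ) (hIJ h1)
    rwa [sub_sub_cancel] at h2
  · exfalso
    have hstep := bound_step d (n - s) hd
    rw [← hD] at hstep
    have hinj : ∀ q : MvPolynomial (Fin s) k, rename σ q ∈ I → q = 0 := by
      intro q hqI
      by_contra hq
      obtain ⟨q', hq', hq'I, hq'd⟩ := exists_low_degree σ hσ I S hgen d D _ hdeg hD1 r h hh hhH hrD
        hrh hrH hrI q hq hqI
      refine hq' (hσI q' (hq'd.trans ?_) hq'I)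
      change D ^ Fintype.card T * (d * (Fintype.card T * D + 1)) ≤ _
      rw [hT]
      exact hstep
    let x : Fin s := ⟨0, hspos⟩
    -- Nonconstant and coprime to `h`, so not invertible after inverting `h`.
    let p : MvPolynomial (Fin s) k := 1 + X x * h
    have hpC : ∀ c : k, p ≠ C c := by
      intro c hpc
      have h1 : X x * h = C (c - 1) := by
        rw [C_sub, C_1, ← hpc]
        simp only [p]
        ring
      have h2 := congrArg totalDegree h1
      rw [totalDegree_mul_of_isDomain (X_ne_zero x) hh, totalDegree_X, totalDegree_C] at h2
      omega
    have hpunit : ¬ IsUnit p := by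
      intro hp
      obtain ⟨c, -, hc⟩ := isUnit_iff_eq_C_of_isReduced.mp hp
      exact hpC c hc
    have hp0 : p ≠ 0 := fun h0 => hpC 0 (by rw [h0, C_0])
    have hpdeg : (rename σ p).totalDegree ≤ (2 * d) ^ (expo (n - 1) * n) := by
      refine (totalDegree_rename_le _ _).trans ((totalDegree_add _ _).trans (max_le (by simp) ?_))
      refine (totalDegree_mul _ _).trans ?_
      rw [totalDegree_X]
      have h1 : h.totalDegree ≤ (n - s) * D := hT ▸ hhH
      calc 1 + h.totalDegree ≤ 1 * (1 * ((n - s) * D + 1)) := by omega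
        _ ≤ D ^ (n - s) * (d * ((n - s) * D + 1)) := by
          gcongr
          exact Nat.one_le_pow _ _ hD1
        _ ≤ (2 * d) ^ expo (n - s) := hstep
        _ ≤ (2 * d) ^ (expo (n - 1) * n) := by
          refine Nat.pow_le_pow_right (by omega) ?_
          exact (expo_mono (by omega)).trans (Nat.le_mul_of_pos_right _ hn)
    obtain ⟨g, hg⟩ := hmax _ hpdeg (fun hpI => hp0 (hinj p hpI))
    have hpg : π (rename σ p) * π g = 1 := by
      rw [← hπ, map_sub, map_mul, map_one, sub_eq_zero] at hg
      exact hg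
    have hlead : ∀ j : T, (r j).leadingCoeff = h := by
      intro j
      rw [Polynomial.leadingCoeff, ← hrh j]
      congr 1
      exact le_antisymm (hrD j) (Polynomial.le_natDegree_of_ne_zero (by rw [hrh]; exact hh))
    obtain ⟨m, hm⟩ := exists_pow_mul_isIntegralElem σ π r h hlead hr0 g
    have hφinj : Function.Injective (π.comp (rename σ)).toRingHom := by
      rw [injective_iff_map_eq_zero]
      intro q hq
      exact hinj q ((hπ _).1 hq)
    have hcop : IsCoprime p (h ^ m) :=
      IsCoprime.pow_right ⟨1, -X x, by simp only [p]; ring⟩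
    refine hpunit (isUnit_of_isIntegralElem _ hφinj p (h ^ m) hcop _ hm ?_)
    change π (rename σ p) * _ = π (rename σ (h ^ m))
    rw [mul_left_comm, hpg, mul_one, map_pow, map_pow]
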